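/- Let Q be a well-formed formula and let N be a Q-complete, Q-consistent extension of the implicational propositional calculus. Define v_N : wf → {0,1} by v_N(A) = 1 when QQA ∈ T(N) and v_N(A) = 0 when QA ∈ T(N) (this is well defined by Q-completeness and Q-consistency). Then v_N is a valuation: for all wfs A, B, v_N(A ⊃ B) = 0 if and only if v_N(A) = 1 and v_N(B) = 0. -/

import Mathlib

/-- Well-formed formulas of the implicational propositional calculus:
propositional variables (indexed by ℕ, so the set of wfs is countable)
and the single connective ⊃. -/
inductive Wf where
  | var : ℕ → Wf
  | imp : Wf → Wf → Wf
deriving DecidableEq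

infixr:60 " ⊃' " => Wf.imp

/-- `Deduces Γ A` : `A` is deducible from the set `Γ` of extra axioms/hypotheses,
using the three axiom schemes of IPC (including the Peirce scheme) and modus ponens.
Theorems of IPC are `Deduces ∅ A`; for an extension `M` of IPC with extra-axiom
set `E`, `T(M)` is `Deduces E`, and deducibility from hypotheses `Γ` in `M` is
`Deduces (E ∪ Γ)`. -/
inductive Deduces : Set Wf → Wf → Prop where
  | hyp : ∀ {Γ : Set Wf} {A : Wf}, A ∈ Γ → Deduces Γ A
  | ax1 : ∀ {Γ : Set Wf} (A B : Wf), Deduces Γ (A ⊃' (B ⊃' A))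
  | ax2 : ∀ {Γ : Set Wf} (A B C : Wf),
      Deduces Γ ((A ⊃' (B ⊃' C)) ⊃' ((A ⊃' B) ⊃' (A ⊃' C)))
  | peirce : ∀ {Γ : Set Wf} (A B : Wf), Deduces Γ (((A ⊃' B) ⊃' A) ⊃' A)
  | mp : ∀ {Γ : Set Wf} {A B : Wf}, Deduces Γ (A ⊃' B) → Deduces Γ A → Deduces Γ B

/-!
Read `A ⊃ Q` as a negation of `A`. By `Q`-completeness it suffices to check the truth table of `⊃`
row by row inside the calculus: `QQB` yields `QQ(A ⊃ B)`; `QQA` and `QB` yield `Q(A ⊃ B)`;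
and `QA` yields `QQ(A ⊃ B)`. Only the last row is classical: it rests on the Peirce scheme.
-/

/-- Negation relative to `Q`: the formula `A ⊃ Q`, written `QA` in the paper. It is reducible, so
that facts about relative negation apply verbatim to formulas `A ⊃ Q`. -/
abbrev Wf.relNeg (Q A : Wf) : Wf := A ⊃' Q

namespace Deduces

open Wf

variable {Γ : Set Wf} {A B C Q : Wf}

theorem imp_intro (h : Deduces Γ B) : Deduces Γ (A ⊃' B) :=
  mp (ax1 B A) h

theorem imp_mono_right (h : Deduces Γ (B ⊃' C)) : Deduces Γ ((A ⊃' B) ⊃' (A ⊃' C)) :=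
  mp (ax2 A B C) (imp_intro h)

theorem imp_trans (hAB : Deduces Γ (A ⊃' B)) (hBC : Deduces Γ (B ⊃' C)) : Deduces Γ (A ⊃' C) :=
  mp (imp_mono_right hBC) hAB

theorem imp_anti_left (h : Deduces Γ (A ⊃' B)) : Deduces Γ ((B ⊃' C) ⊃' (A ⊃' C)) :=
  have distrib : Deduces Γ ((B ⊃' C) ⊃' ((A ⊃' B) ⊃' (A ⊃' C))) :=
    imp_trans (ax1 (B ⊃' C) A) (ax2 A B C)
  mp (mp (ax2 _ _ _) distrib) (imp_intro h)

theorem relNeg_relNeg_imp_of_right (hB : Deduces Γ (relNeg Q (relNeg Q B))) :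
    Deduces Γ (relNeg Q (relNeg Q (A ⊃' B))) :=
  imp_trans (imp_anti_left (ax1 B A)) hB

theorem relNeg_imp (hA : Deduces Γ (relNeg Q (relNeg Q A))) (hB : Deduces Γ (relNeg Q B)) :
    Deduces Γ (relNeg Q (A ⊃' B)) :=
  imp_trans (imp_mono_right hB) hA

theorem relNeg_relNeg_imp_of_left (hA : Deduces Γ (relNeg Q A)) :
    Deduces Γ (relNeg Q (relNeg Q (A ⊃' B))) :=
  have peirce_premise : Deduces Γ (((A ⊃' B) ⊃' Q) ⊃' ((Q ⊃' B) ⊃' Q)) :=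
    imp_anti_left (imp_anti_left hA)
  imp_trans peirce_premise (peirce Q B)

end Deduces

/-- Let N (extra axioms E) be a Q-complete, Q-consistent extension of IPC and
let v = v_N be defined by v(A) = 1 when QQA ∈ T(N) and v(A) = 0 when
QA ∈ T(N).  Then v is a valuation: v(A ⊃ B) = 0 iff v(A) = 1 and v(B) = 0. -/
theorem stmt_13 (Q : Wf) (E : Set Wf)
    (hcomplete : ∀ A : Wf, Deduces E ((A ⊃' Q) ⊃' Q) ∨ Deduces E (A ⊃' Q))
    (hcons : ¬ Deduces E Q)
    (v : Wf → ℕ)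
    (hv1 : ∀ A : Wf, Deduces E ((A ⊃' Q) ⊃' Q) → v A = 1)
    (hv0 : ∀ A : Wf, Deduces E (A ⊃' Q) → v A = 0) :
    ∀ A B : Wf, v (A ⊃' B) = 0 ↔ (v A = 1 ∧ v B = 0) := by
  intro A B
  rcases hcomplete B with hB | hB
  · have hAB : Deduces E (((A ⊃' B) ⊃' Q) ⊃' Q) := hB.relNeg_relNeg_imp_of_right
    simp [hv1 _ hAB, hv1 _ hB]
  · rcases hcomplete A with hA | hA
    · have hAB : Deduces E ((A ⊃' B) ⊃' Q) := hA.relNeg_imp hB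
      simp [hv0 _ hAB, hv1 _ hA, hv0 _ hB]
    · have hAB : Deduces E (((A ⊃' B) ⊃' Q) ⊃' Q) := hA.relNeg_relNeg_imp_of_left
      simp [hv1 _ hAB, hv0 _ hA]
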